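/- Let G be a d-regular graph on n vertices with d ≥ 2, and let λ = λ(G) = max{|λ₂|,|λₙ|} for its adjacency eigenvalues λ₁ ≥ λ₂ ≥ ⋯ ≥ λₙ. Then for every integer k ≥ 1, d^{2k} + (n−1)·λ^{2k} ≥ (n/k)·binom(2k−2, k−1)·d·(d−1)^{k−1}. -/

import Mathlib

/-!
Both sides are compared with `tr A^{2k}`, where `A` is the adjacency matrix.

Since `tr A^{2k} = ∑ λ_i^{2k}`, every eigenvalue is at most `d` in absolute value (Gershgorin),
and all but `λ₁` are at most `λ(G)` in absolute value, the trace is at most the right-hand side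
(`sum_eigs_pow_le`).

For the lower bound, `(A^ℓ)_{vr}` counts the walks of length `ℓ` from `v` to `r`. Fix a walk
`v = u₀, u₁, …, u_h = r` and regard it as a stack. A further walk starting at `v` either steps to
`u₁`, which pops the stack, or steps to one of the `d - 1` other neighbours, which pushes one more
vertex. The walks of length `h + 2m` that first empty the stack at their last step make `m`
pushes, so there are `(d-1)^m` of them for each ballot sequence with `m` pushes. This gives
`(A^{h+2m})_{vr} ≥ ballot m h * (d-1)^m` (`ballot_le_pow_apply`), by induction on the length.
A closed walk of length `2k` at `v` is a step to one of the `d` neighbours followed by a walk of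
length `1 + 2(k-1)` back to `v`, and `ballot (k-1) 1` is the Catalan number
`binom(2k-2, k-1) / k`.
-/

open Classical in
/-- The real adjacency matrix of a graph on `Fin n`. -/
noncomputable def adjM {n : ℕ} (G : SimpleGraph (Fin n)) : Matrix (Fin n) (Fin n) ℝ :=
  Matrix.of fun i j => if G.Adj i j then 1 else 0

lemma adjM_isHermitian {n : ℕ} (G : SimpleGraph (Fin n)) : (adjM G).IsHermitian := by
  show (adjM G).conjTranspose = adjM G
  ext i j
  simp only [adjM, Matrix.conjTranspose_apply, Matrix.of_apply, apply_ite, star_one, star_zero]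
  rw [G.adj_comm j i]
  split <;> simp_all

/-- The eigenvalues (with multiplicity, unordered) of the adjacency matrix of `G`. -/
noncomputable def eigs {n : ℕ} (G : SimpleGraph (Fin n)) : Fin n → ℝ :=
  (adjM_isHermitian G).eigenvalues

/-- `μ` lists the adjacency eigenvalues of `G` in nonincreasing order
`λ₁ ≥ λ₂ ≥ ⋯ ≥ λₙ`. -/
def IsDescSpectrum {n : ℕ} (G : SimpleGraph (Fin n)) (μ : Fin n → ℝ) : Prop :=
  Antitone μ ∧ ∃ σ : Equiv.Perm (Fin n), μ = eigs G ∘ σ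

/-- Given the nonincreasing eigenvalue list `μ = (λ₁, λ₂, …, λₙ)`, this is
`λ = max {|λ_i| : 2 ≤ i ≤ n} = max {|λ₂|, |λₙ|}`. -/
noncomputable def lamOf {n : ℕ} (μ : Fin n → ℝ) : ℝ :=
  sSup {x : ℝ | ∃ i : Fin n, i.val ≠ 0 ∧ x = |μ i|}

/-- `G` is `d`-regular: every vertex has exactly `d` neighbours. -/
def IsReg {n : ℕ} (G : SimpleGraph (Fin n)) (d : ℕ) : Prop :=
  ∀ v : Fin n, {u : Fin n | G.Adj v u}.ncard = d

/-- `G` is an `(n,d,λ)`-graph: an `n`-vertex `d`-regular graph whose adjacency eigenvalues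
`λ₁ ≥ λ₂ ≥ ⋯ ≥ λₙ` satisfy `max {|λ₂|, |λₙ|} = lam`. -/
def IsNDL {n : ℕ} (G : SimpleGraph (Fin n)) (d : ℕ) (lam : ℝ) : Prop :=
  IsReg G d ∧ ∀ μ : Fin n → ℝ, IsDescSpectrum G μ → lamOf μ = lam

/-- The number of sequences of `m` steps `+1` and `h + m` steps `-1` that lead from height `h` to
height `0` and reach `0` only at the end, in its closed form (reflection principle)
`binom(h+2m-1, m) - binom(h+2m-1, m-1)`. -/
def ballot : ℕ → ℕ → ℝ
  | 0, _ => 1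
  | m + 1, h => ((2 * m + h + 1).choose (m + 1) : ℝ) - ((2 * m + h + 1).choose m : ℝ)

lemma ballot_succ_zero (m : ℕ) : ballot (m + 1) 0 = 0 := by
  simp [ballot, Nat.choose_symm_half]

/-- The first step is either down, to height `h`, or up, to height `h + 2`. -/
lemma ballot_succ_succ (m h : ℕ) :
    ballot (m + 1) (h + 1) = ballot (m + 1) h + ballot m (h + 2) := by
  cases m with
  | zero => simp [ballot]
  | succ j =>
    simp only [ballot]
    rw [show 2 * (j + 1) + (h + 1) + 1 = (2 * j + h + 3) + 1 by ring,
      show 2 * (j + 1) + h + 1 = 2 * j + h + 3 by ring,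
      show 2 * j + (h + 2) + 1 = 2 * j + h + 3 by ring,
      Nat.choose_succ_succ (2 * j + h + 3) (j + 1), Nat.choose_succ_succ (2 * j + h + 3) j]
    push_cast
    ring

/-- `ballot m 1` is the `m`-th Catalan number. -/
lemma ballot_one (m : ℕ) : ((m : ℝ) + 1) * ballot m 1 = ((2 * m).choose m : ℝ) := by
  cases m with
  | zero => simp [ballot]
  | succ j =>
    have h := Nat.choose_succ_right_eq (2 * j + 2) j
    rw [show 2 * j + 2 - j = j + 2 by omega] at h
    have h' : ((2 * j + 2).choose (j + 1) : ℝ) * (j + 1) = (2 * j + 2).choose j * (j + 2) := by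
      exact_mod_cast h
    simp only [ballot]
    rw [show 2 * j + 1 + 1 = 2 * j + 2 by ring, show 2 * (j + 1) = 2 * j + 2 by ring]
    push_cast
    linarith

section
variable {n d : ℕ} {G : SimpleGraph (Fin n)}

lemma adjM_nonneg (v w : Fin n) : 0 ≤ adjM G v w := by
  simp only [adjM, Matrix.of_apply]; split <;> simp

lemma adjM_of_adj {v w : Fin n} (h : G.Adj v w) : adjM G v w = 1 := by
  simp [adjM, h]

lemma adjM_of_not_adj {v w : Fin n} (h : ¬ G.Adj v w) : adjM G v w = 0 := by
  simp [adjM, h]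

lemma adjM_row_sum (hG : IsReg G d) (v : Fin n) : ∑ w, adjM G v w = d := by
  classical
  rw [← hG v, Set.ncard_eq_toFinset_card']
  simp [adjM, Finset.sum_boole]

lemma adjM_pow_nonneg (l : ℕ) (v w : Fin n) : 0 ≤ (adjM G ^ l) v w := by
  induction l generalizing v with
  | zero => rw [pow_zero, Matrix.one_apply]; split <;> simp
  | succ l ih =>
    rw [pow_succ', Matrix.mul_apply]
    exact Finset.sum_nonneg fun u _ => mul_nonneg (adjM_nonneg v u) (ih u)

lemma mul_le_sum_adjM (hG : IsReg G d) {v : Fin n} {X : Fin n → ℝ} {c : ℝ}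
    (hX : ∀ w, G.Adj v w → c ≤ X w) : d * c ≤ ∑ w, adjM G v w * X w := by
  rw [← adjM_row_sum hG v, Finset.sum_mul]
  refine Finset.sum_le_sum fun w _ => ?_
  by_cases h : G.Adj v w
  · simpa [adjM_of_adj h] using hX w h
  · simp [adjM_of_not_adj h]

/-- One neighbour `u` of `v` contributes `X u`, the other `d - 1` at least `c` each. -/
lemma add_mul_le_sum_adjM (hG : IsReg G d) {v u : Fin n} (hu : G.Adj v u) {X : Fin n → ℝ} {c : ℝ}
    (hX : ∀ w, G.Adj v w → c ≤ X w) :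
    X u + ((d : ℝ) - 1) * c ≤ ∑ w, adjM G v w * X w := by
  have h1 : adjM G v u * (X u - c) ≤ ∑ w, adjM G v w * (X w - c) := by
    refine Finset.single_le_sum (f := fun w => adjM G v w * (X w - c)) (fun w _ => ?_)
      (Finset.mem_univ u)
    by_cases h : G.Adj v w
    · simpa [adjM_of_adj h] using hX w h
    · simp [adjM_of_not_adj h]
  have h2 : ∑ w, adjM G v w * (X w - c) = ∑ w, adjM G v w * X w - d * c := by
    rw [← adjM_row_sum hG v, Finset.sum_mul, ← Finset.sum_sub_distrib]
    exact Finset.sum_congr rfl fun w _ => by ring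
  rw [adjM_of_adj hu, h2] at h1
  linarith

/-- The walk `p` plays the role of the stack: it is only required to have the right length, and
may backtrack. -/
lemma ballot_le_pow_apply (hG : IsReg G d) (l : ℕ) :
    ∀ (m : ℕ) (v r : Fin n) (p : G.Walk v r), l = p.length + 2 * m →
      ballot m p.length * ((d : ℝ) - 1) ^ m ≤ (adjM G ^ l) v r := by
  induction l with
  | zero =>
    intro m v r p hl
    obtain rfl : m = 0 := by omega
    cases p with
    | nil => simp [ballot]
    | cons h p => simp at hl
  | succ l ih =>
    intro m v r p hl
    cases p with
    | nil =>
      obtain ⟨m, rfl⟩ : ∃ j, m = j + 1 := Nat.exists_eq_succ_of_ne_zero (by simp at hl; omega)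
      rw [SimpleGraph.Walk.length_nil, ballot_succ_zero, zero_mul]
      exact adjM_pow_nonneg _ _ _
    | @cons _ u _ h p =>
      rw [SimpleGraph.Walk.length_cons] at hl ⊢
      rw [pow_succ', Matrix.mul_apply]
      have hpop := ih m u r p (by omega)
      cases m with
      | zero =>
        have := add_mul_le_sum_adjM hG h (X := fun w => (adjM G ^ l) w r) (c := 0)
          fun w _ => adjM_pow_nonneg _ _ _
        simp only [ballot] at hpop ⊢
        linarith
      | succ m =>
        have := add_mul_le_sum_adjM hG h (X := fun w => (adjM G ^ l) w r)
          (c := ballot m (p.length + 2) * ((d : ℝ) - 1) ^ m) fun w hw => by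
            -- push `w` onto the stack
            simpa using ih m w r (.cons hw.symm (.cons h p)) (by simp; omega)
        rw [ballot_succ_succ, add_mul]
        refine le_trans (le_of_eq ?_) ((add_le_add_left hpop _).trans this)
        ring

lemma catalan_le_pow_apply (hG : IsReg G d) (m : ℕ) (v : Fin n) :
    d * (ballot m 1 * ((d : ℝ) - 1) ^ m) ≤ (adjM G ^ (2 * (m + 1))) v v := by
  rw [show 2 * (m + 1) = (1 + 2 * m) + 1 by ring, pow_succ', Matrix.mul_apply]
  refine mul_le_sum_adjM hG fun w hw => ?_
  simpa using ballot_le_pow_apply hG (1 + 2 * m) m w v (.cons hw.symm .nil) (by simp)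

lemma trace_adjM_pow (l : ℕ) : (adjM G ^ l).trace = ∑ i, eigs G i ^ l := by
  conv_lhs => rw [(adjM_isHermitian G).spectral_theorem, ← map_pow,
    Unitary.conjStarAlgAut_apply, Matrix.trace_mul_comm, ← mul_assoc]
  simp [Matrix.diagonal_pow, Matrix.trace_diagonal, eigs]

lemma abs_eigs_le (hG : IsReg G d) (i : Fin n) : |eigs G i| ≤ d := by
  have hs : eigs G i ∈ spectrum ℝ (adjM G) := (adjM_isHermitian G).eigenvalues_mem_spectrum_real i
  rw [← Matrix.spectrum_toLin', ← Module.End.hasEigenvalue_iff_mem_spectrum] at hs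
  obtain ⟨v, hv⟩ := eigenvalue_mem_ball hs
  rw [adjM_of_not_adj (G.loopless.irrefl v), Metric.mem_closedBall, dist_zero_right,
    Real.norm_eq_abs] at hv
  refine hv.trans ?_
  rw [← adjM_row_sum hG v]
  refine (Finset.sum_le_sum_of_subset_of_nonneg (Finset.subset_univ _)
    fun _ _ _ => norm_nonneg _).trans_eq ?_
  exact Finset.sum_congr rfl fun w _ => by rw [Real.norm_of_nonneg (adjM_nonneg v w)]

lemma abs_le_lamOf (μ : Fin n → ℝ) {i : Fin n} (hi : i.val ≠ 0) : |μ i| ≤ lamOf μ := by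
  refine le_csSup ?_ ⟨i, hi, rfl⟩
  refine ((Set.finite_range fun j => |μ j|).subset ?_).bddAbove
  rintro _ ⟨j, _, rfl⟩
  exact ⟨j, rfl⟩

lemma sum_eigs_pow_le (hG : IsReg G d) {μ : Fin n → ℝ} (hμ : IsDescSpectrum G μ) (k : ℕ) :
    ∑ i, eigs G i ^ (2 * k) ≤ (d : ℝ) ^ (2 * k) + ((n : ℝ) - 1) * (lamOf μ) ^ (2 * k) := by
  obtain ⟨-, σ, hσ⟩ := hμ
  have hsum : ∑ i, eigs G i ^ (2 * k) = ∑ i, μ i ^ (2 * k) := by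
    rw [hσ]; exact (Equiv.sum_comp σ fun i => eigs G i ^ (2 * k)).symm
  rw [hsum]
  have hpow {x y : ℝ} (h : |x| ≤ y) : x ^ (2 * k) ≤ y ^ (2 * k) := by
    rw [← (even_two_mul k).pow_abs x]
    exact pow_le_pow_left₀ (abs_nonneg x) h _
  cases n with
  | zero =>
    -- Here `lamOf μ` is the supremum of the empty set, with value `0`.
    have hlam : lamOf μ = 0 := by simp [lamOf]
    rw [hlam]
    rcases Nat.eq_zero_or_pos k with rfl | hk
    · simp
    · simp [show k ≠ 0 by omega]
  | succ n =>
    rw [Fin.sum_univ_succ]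
    refine add_le_add (hpow ?_) ?_
    · rw [hσ]; exact abs_eigs_le hG _
    · refine (Finset.sum_le_sum fun i _ => hpow (abs_le_lamOf μ (i := i.succ) (by simp))).trans_eq ?_
      simp

end

/-- For a `d`-regular graph `G` on `n` vertices with `d ≥ 2` and `λ = λ(G)`, for every
`k ≥ 1` one has `d^{2k} + (n−1)λ^{2k} ≥ (n/k)·C(2k−2,k−1)·d·(d−1)^{k−1}`. -/
theorem trace_closed_walk_bound {n d : ℕ} (hd : 2 ≤ d) (G : SimpleGraph (Fin n))
    (hG : IsReg G d) (μ : Fin n → ℝ) (hμ : IsDescSpectrum G μ) :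
    ∀ k : ℕ, 1 ≤ k →
      ((n : ℝ) / k) * ((2 * k - 2).choose (k - 1) : ℝ) * d * ((d : ℝ) - 1) ^ (k - 1)
        ≤ (d : ℝ) ^ (2 * k) + ((n : ℝ) - 1) * (lamOf μ) ^ (2 * k) := by
  intro k hk
  obtain ⟨m, rfl⟩ : ∃ m, k = m + 1 := ⟨k - 1, by omega⟩
  refine le_trans ?_ (sum_eigs_pow_le hG hμ (m + 1))
  rw [← trace_adjM_pow, Matrix.trace]
  refine le_trans (le_of_eq ?_) (Finset.sum_le_sum fun v _ => catalan_le_pow_apply hG m v)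
  rw [Finset.sum_const, Finset.card_univ, Fintype.card_fin, nsmul_eq_mul,
    show 2 * (m + 1) - 2 = 2 * m by omega, Nat.add_sub_cancel, ← ballot_one]
  have : (m : ℝ) + 1 ≠ 0 := by positivity
  push_cast
  field_simp
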